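/- Let M be a metric space in which every closed bounded set is compact (for instance, a connected complete Riemannian manifold with its Riemannian distance), and let G be a subgroup of the isometry group Iso(M) that is closed in the compact-open topology. Then the action of G on M given by (g,x) ↦ g(x) is proper: whenever {gₙ} is a sequence in G and {xₙ} a sequence in M such that xₙ → x and gₙ(xₙ) → y for some x, y ∈ M, the sequence {gₙ} admits a subsequence that converges, uniformly on every compact subset of M, to an element of G. Equivalently, the map G × M → M × M, (g,x) ↦ (g(x), x), is a proper map (preimages of compact sets are compact). -/

import Mathlib

open Filter

/-- Let `M` be a metric space in which every closed bounded set is compact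
(for instance, a connected complete Riemannian manifold with its Riemannian distance), and
let `G` be a subgroup of the isometry group `Iso(M)` that is closed in the compact-open
topology (i.e. the limit of any sequence in `G` that converges uniformly on every compact

subset of `M` again belongs to `G`).  Then the action of `G` on `M` given by
`(g, x) ↦ g(x)` is proper: whenever `(gₙ)` is a sequence in `G` and `(xₙ)` a sequence in `M`
such that `xₙ → x` and `gₙ(xₙ) → y` for some `x, y ∈ M`, the sequence `(gₙ)` admits a
subsequence that converges, uniformly on every compact subset of `M`, to an element of
`G`. -/
theorem isometry_subgroup_acts_properly
    {M : Type*} [MetricSpace M]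
    -- every closed bounded subset of `M` is compact:
    (hproper : ∀ s : Set M, IsClosed s → Bornology.IsBounded s → IsCompact s)
    -- `G` is a subgroup of the isometry group of `M`:
    (G : Subgroup (M ≃ᵢ M))
    -- which is closed in the compact-open topology:
    (hclosed : ∀ (g : ℕ → ↥G) (f : M → M),
      (∀ K : Set M, IsCompact K →
        TendstoUniformlyOn (fun n => ((g n : M ≃ᵢ M) : M → M)) f atTop K) →
      ∃ h : M ≃ᵢ M, h ∈ G ∧ (h : M → M) = f)
    -- sequences witnessing the properness condition:
    (g : ℕ → ↥G) (x : ℕ → M) (x₀ y₀ : M)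
    (hx : Tendsto x atTop (nhds x₀))
    (hgx : Tendsto (fun n => ((g n : M ≃ᵢ M)) (x n)) atTop (nhds y₀)) :
    -- conclusion: a subsequence of `(gₙ)` converges uniformly on compact subsets to an
    -- element of `G`:
    ∃ φ : ℕ → ℕ, StrictMono φ ∧ ∃ h : M ≃ᵢ M, h ∈ G ∧
      ∀ K : Set M, IsCompact K →
        TendstoUniformlyOn (fun n => ((g (φ n) : M ≃ᵢ M) : M → M)) (⇑h) atTop K := by
  have : ProperSpace M := ⟨fun c r => hproper _ Metric.isClosed_closedBall Metric.isBounded_closedBall⟩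
  have : Nonempty M := ⟨x₀⟩
  have hiso : ∀ n a b, dist ((g n : M ≃ᵢ M) a) ((g n : M ≃ᵢ M) b) = dist a b :=
    fun n a b => (g n : M ≃ᵢ M).isometry.dist_eq a b
  -- boundedness of the two sequences
  obtain ⟨A, hA⟩ := (Metric.isBounded_range_of_tendsto x hx).subset_closedBall x₀
  obtain ⟨B, hB⟩ := (Metric.isBounded_range_of_tendsto _ hgx).subset_closedBall y₀
  have hA' : ∀ n, dist (x n) x₀ ≤ A := fun n => hA ⟨n, rfl⟩
  have hB' : ∀ n, dist ((g n : M ≃ᵢ M) (x n)) y₀ ≤ B := fun n => hB ⟨n, rfl⟩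
  -- diagonal extraction on a dense sequence
  let d : ℕ → M := TopologicalSpace.denseSeq M
  have hd : DenseRange d := TopologicalSpace.denseRange_denseSeq M
  have hcomp : IsCompact (Set.pi Set.univ
      (fun k => Metric.closedBall y₀ (dist (d k) x₀ + A + B))) :=
    isCompact_univ_pi fun k => isCompact_closedBall _ _
  have hmem : ∀ n, (fun k => (g n : M ≃ᵢ M) (d k)) ∈ Set.pi Set.univ
      (fun k => Metric.closedBall y₀ (dist (d k) x₀ + A + B)) := by
    intro n k _
    rw [Metric.mem_closedBall]
    have h1 := dist_triangle ((g n : M ≃ᵢ M) (d k)) ((g n : M ≃ᵢ M) (x n)) y₀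
    have h2 := dist_triangle_right (d k) (x n) x₀
    rw [hiso] at h1
    linarith [hA' n, hB' n]
  obtain ⟨l, -, φ, hφ, hl⟩ := hcomp.tendsto_subseq hmem
  rw [tendsto_pi_nhds] at hl
  have hcau : ∀ z, CauchySeq (fun n => (g (φ n) : M ≃ᵢ M) z) := by
    intro z
    rw [Metric.cauchySeq_iff']
    intro ε hε
    obtain ⟨k, hk⟩ := hd.exists_dist_lt z (by positivity : (0 : ℝ) < ε / 3)
    have hc : CauchySeq (fun n => (g (φ n) : M ≃ᵢ M) (d k)) := (hl k).cauchySeq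
    rw [Metric.cauchySeq_iff'] at hc
    obtain ⟨N, hN⟩ := hc (ε / 3) (by positivity)
    refine ⟨N, fun n hn => ?_⟩
    have h1 := dist_triangle4 ((g (φ n) : M ≃ᵢ M) z) ((g (φ n) : M ≃ᵢ M) (d k))
      ((g (φ N) : M ≃ᵢ M) (d k)) ((g (φ N) : M ≃ᵢ M) z)
    rw [hiso, hiso, dist_comm (d k) z] at h1
    linarith [hN n hn]
  choose f hf using fun z => cauchySeq_tendsto_of_complete (hcau z)
  have hfiso : ∀ a b, dist (f a) (f b) = dist a b := by
    intro a b
    have h1 := (hf a).dist (hf b)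
    simp only [hiso] at h1
    exact tendsto_nhds_unique h1 tendsto_const_nhds |>.symm ▸ rfl
  have hunif : ∀ K : Set M, IsCompact K →
      TendstoUniformlyOn (fun n => ((g (φ n) : M ≃ᵢ M) : M → M)) f atTop K := by
    intro K hK
    rw [← tendstoLocallyUniformlyOn_iff_tendstoUniformlyOn_of_compact hK,
      Metric.tendstoLocallyUniformlyOn_iff]
    intro ε hε z _
    refine ⟨Metric.ball z (ε / 3),
      mem_nhdsWithin_of_mem_nhds (Metric.ball_mem_nhds z (by positivity)), ?_⟩
    filter_upwards [Metric.tendsto_nhds.1 (hf z) (ε / 3) (by positivity)] with n hn w hw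
    rw [Metric.mem_ball] at hw
    have h1 := dist_triangle4 (f w) (f z) ((g (φ n) : M ≃ᵢ M) z) ((g (φ n) : M ≃ᵢ M) w)
    rw [hiso, hfiso, dist_comm z w, dist_comm (f z)] at h1
    linarith
  obtain ⟨h, hG, rfl⟩ := hclosed (fun n => g (φ n)) f hunif
  exact ⟨φ, hφ, h, hG, hunif⟩
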